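/- arXiv:1710.08223 — 2 statements merged into one kernel-verified Lean document; each statement's English description precedes it below -/
import Mathlib

section
/- Let q be a prime, let m, n ≥ 1 be integers, and let B be a real number with 0 ≤ B < q/2. For A drawn uniformly at random from the set of m×n matrices over ℤ/qℤ, the probability that the q-ary lattice Λ_q(A) contains a nonzero vector y with Euclidean norm ‖y‖₂ ≤ B is at most q^{n−m} · #{y ∈ ℤ^m : y ≠ 0, ‖y‖₂ ≤ B}. -/
/-!
A vector `y` lies in `Λ_q(A)` when `A x ≡ y (mod q)` for some `x`. An integer vector `y ≠ 0` of
norm less than `q` stays nonzero modulo `q`, so such an `x` is nonzero as well; as `q` is prime,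
`A ↦ A x` is then a surjective homomorphism, and `A x = y` has probability exactly `q^{-m}`. The
theorem is the union bound over the `q^n` vectors `x` and all the short vectors `y`.
-/

open Matrix

theorem ncard_fiber_mul_card_of_surjective {G H : Type*} [AddGroup G] [AddGroup H] {f : G →+ H}
    (hf : Function.Surjective f) (h : H) : (f ⁻¹' {h}).ncard * Nat.card H = Nat.card G := by
  have hker : (f ⁻¹' {h}).ncard = Nat.card f.ker :=
    Nat.card_congr (AddMonoidHom.fiberEquivKerOfSurjective hf h)
  have hindex : f.ker.index = Nat.card H := by
    rw [AddSubgroup.index_ker, AddMonoidHom.range_eq_top.mpr hf, AddSubgroup.card_top]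
  rw [hker, ← hindex, AddSubgroup.card_mul_index]

section DivisionRing

variable {ι κ K : Type*} [Fintype κ] [DivisionRing K]

theorem mulVec_left_surjective {x : κ → K} (hx : x ≠ 0) :
    Function.Surjective fun A : Matrix ι κ K ↦ A *ᵥ x := by
  classical
  intro y
  obtain ⟨j, hj⟩ := Function.ne_iff.mp hx
  refine ⟨vecMulVec y (Pi.single j (x j)⁻¹), ?_⟩
  simp only [vecMulVec_mulVec, single_dotProduct, inv_mul_cancel₀ hj, MulOpposite.op_one, one_smul]

theorem ncard_mulVec_eq_mul_card {x : κ → K} (hx : x ≠ 0) (y : ι → K) :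
    {A : Matrix ι κ K | A *ᵥ x = y}.ncard * Nat.card (ι → K) = Nat.card (Matrix ι κ K) :=
  ncard_fiber_mul_card_of_surjective (f := mulVec.addMonoidHomLeft x) (mulVec_left_surjective hx) y

theorem ncard_mulVec_eq_mul_card_le {y : ι → K} (hy : y ≠ 0) (x : κ → K) :
    {A : Matrix ι κ K | A *ᵥ x = y}.ncard * Nat.card (ι → K) ≤ Nat.card (Matrix ι κ K) := by
  obtain rfl | hx := eq_or_ne x 0
  · simp [hy.symm]
  · exact (ncard_mulVec_eq_mul_card hx y).le

variable [Finite ι] [Finite K]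

theorem ncard_exists_mulVec_mem_mul_card_le {Y : Set (ι → K)} (hY : 0 ∉ Y) :
    {A : Matrix ι κ K | ∃ x, A *ᵥ x ∈ Y}.ncard * Nat.card (ι → K) ≤
      Y.ncard * Nat.card (κ → K) * Nat.card (Matrix ι κ K) := by
  classical
  have := Fintype.ofFinite K
  have := Fintype.ofFinite Y
  have hunion : {A : Matrix ι κ K | ∃ x, A *ᵥ x ∈ Y} =
      ⋃ p : Y × (κ → K), {A | A *ᵥ p.2 = p.1} := by
    ext A
    simp
  calc {A : Matrix ι κ K | ∃ x, A *ᵥ x ∈ Y}.ncard * Nat.card (ι → K)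
      ≤ (∑ p : Y × (κ → K), {A : Matrix ι κ K | A *ᵥ p.2 = p.1}.ncard) * Nat.card (ι → K) := by
        rw [hunion]
        gcongr
        exact Set.ncard_iUnion_le_of_fintype _
    _ = ∑ p : Y × (κ → K), {A : Matrix ι κ K | A *ᵥ p.2 = p.1}.ncard * Nat.card (ι → K) :=
        Finset.sum_mul ..
    _ ≤ ∑ _p : Y × (κ → K), Nat.card (Matrix ι κ K) := by
        gcongr with p
        exact ncard_mulVec_eq_mul_card_le (ne_of_mem_of_not_mem p.1.2 hY) p.2
    _ = Y.ncard * Nat.card (κ → K) * Nat.card (Matrix ι κ K) := by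
        rw [Finset.sum_const, smul_eq_mul, Finset.card_univ, ← Nat.card_eq_fintype_card,
          Nat.card_prod, Nat.card_coe_set_eq]

theorem ncard_exists_mulVec_mem_div_card_le {Y : Set (ι → K)} (hY : 0 ∉ Y) :
    ({A : Matrix ι κ K | ∃ x, A *ᵥ x ∈ Y}.ncard : ℝ) / Nat.card (Matrix ι κ K) ≤
      (Nat.card K : ℝ) ^ Nat.card κ / (Nat.card K : ℝ) ^ Nat.card ι * Y.ncard := by
  have hK : (0 : ℝ) < Nat.card K := by exact_mod_cast Nat.card_pos
  have hM : (0 : ℝ) < Nat.card (Matrix ι κ K) := by exact_mod_cast Nat.card_pos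
  have hcount := ncard_exists_mulVec_mem_mul_card_le (κ := κ) hY
  rw [Nat.card_fun, Nat.card_fun] at hcount
  rw [div_mul_eq_mul_div, div_le_div_iff₀ hM (by positivity), mul_comm (_ ^ _) (Y.ncard : ℝ)]
  exact_mod_cast hcount

end DivisionRing

section Norm

variable {ι : Type*} [Fintype ι]

theorem abs_le_sqrt_sum_sq (v : ι → ℝ) (i : ι) : |v i| ≤ √(∑ j, v j ^ 2) :=
  Real.abs_le_sqrt <|
    Finset.single_le_sum (f := fun j ↦ v j ^ 2) (fun _ _ ↦ sq_nonneg _) (Finset.mem_univ i)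

theorem finite_setOf_sqrt_sum_intCast_sq_le (B : ℝ) :
    {y : ι → ℤ | √(∑ i, (y i : ℝ) ^ 2) ≤ B}.Finite := by
  classical
  refine (Set.finite_Icc (fun _ ↦ -⌊B⌋) (fun _ ↦ ⌊B⌋)).subset fun y hy ↦ ?_
  have habs (i : ι) : |y i| ≤ ⌊B⌋ := by
    rw [Int.le_floor, Int.cast_abs]
    exact (abs_le_sqrt_sum_sq (fun j ↦ (y j : ℝ)) i).trans hy
  exact ⟨fun i ↦ (abs_le.mp (habs i)).1, fun i ↦ (abs_le.mp (habs i)).2⟩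

theorem intCast_zmod_ne_zero_of_sqrt_sum_sq_lt {q : ℕ} {y : ι → ℤ} (hy : y ≠ 0)
    (hyq : √(∑ i, (y i : ℝ) ^ 2) < q) : (fun i ↦ (y i : ZMod q)) ≠ 0 := by
  obtain ⟨i, hi⟩ := Function.ne_iff.mp hy
  have habs : |y i| < q := by
    exact_mod_cast (abs_le_sqrt_sum_sq (fun j ↦ (y j : ℝ)) i).trans_lt hyq
  intro h
  exact hi (Int.eq_zero_of_abs_lt_dvd
    ((ZMod.intCast_zmod_eq_zero_iff_dvd _ _).mp (congrFun h i)) habs)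

end Norm

theorem qary_lattice_l2_min_general {ι κ : Type*} [Fintype ι] [Fintype κ] {q : ℕ} (hq : q.Prime)
    {B : ℝ} (hBq : B < q) :
    (Nat.card {A : Matrix ι κ (ZMod q) //
        ∃ y : ι → ℤ, y ≠ 0 ∧ √(∑ i, (y i : ℝ) ^ 2) ≤ B ∧
          ∃ x : κ → ZMod q, (fun i ↦ (y i : ZMod q)) = A *ᵥ x} : ℝ)
        / Nat.card (Matrix ι κ (ZMod q))
      ≤ (q : ℝ) ^ Nat.card κ / (q : ℝ) ^ Nat.card ι *
        Nat.card {y : ι → ℤ // y ≠ 0 ∧ √(∑ i, (y i : ℝ) ^ 2) ≤ B} := by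
  have : Fact q.Prime := ⟨hq⟩
  let S : Set (ι → ℤ) := {y | y ≠ 0 ∧ √(∑ i, (y i : ℝ) ^ 2) ≤ B}
  let reduce : (ι → ℤ) → ι → ZMod q := fun y i ↦ y i
  have hS : S.Finite := (finite_setOf_sqrt_sum_intCast_sq_le B).subset fun _ hy ↦ hy.2
  have hzero : 0 ∉ reduce '' S := by
    rintro ⟨y, hy, hy0⟩
    exact intCast_zmod_ne_zero_of_sqrt_sum_sq_lt hy.1 (hy.2.trans_lt hBq) hy0
  have hevent (A : Matrix ι κ (ZMod q)) :
      (∃ y : ι → ℤ, y ≠ 0 ∧ √(∑ i, (y i : ℝ) ^ 2) ≤ B ∧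
        ∃ x : κ → ZMod q, (fun i ↦ (y i : ZMod q)) = A *ᵥ x) ↔ ∃ x, A *ᵥ x ∈ reduce '' S :=
    ⟨fun ⟨y, hy0, hyB, x, hx⟩ ↦ ⟨x, y, ⟨hy0, hyB⟩, hx⟩,
      fun ⟨x, y, ⟨hy0, hyB⟩, hx⟩ ↦ ⟨y, hy0, hyB, x, hx⟩⟩
  calc _ = ({A : Matrix ι κ (ZMod q) | ∃ x, A *ᵥ x ∈ reduce '' S}.ncard : ℝ) /
        Nat.card (Matrix ι κ (ZMod q)) := by
        rw [Nat.card_congr (Equiv.subtypeEquivRight hevent)]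
        rfl
    _ ≤ (q : ℝ) ^ Nat.card κ / (q : ℝ) ^ Nat.card ι * (reduce '' S).ncard := by
        simpa only [Nat.card_zmod] using ncard_exists_mulVec_mem_div_card_le (κ := κ) hzero
    _ ≤ (q : ℝ) ^ Nat.card κ / (q : ℝ) ^ Nat.card ι * S.ncard := by
        gcongr
        exact Set.ncard_image_le hS

/-- **Minimum of a random q-ary lattice in Euclidean norm** (probabilistic core of the
paper's Lemma 2.8). For a uniform `A ∈ (ℤ/qℤ)^{m×n}`, the probability that `Λ_q(A)`
contains a nonzero vector of Euclidean norm at most `B < q/2` is at most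
`q^{n−m} · #{y ∈ ℤ^m : y ≠ 0, ‖y‖₂ ≤ B}`. -/
theorem qary_lattice_l2_min (q m n : ℕ) (hq : q.Prime) (hm : 1 ≤ m) (hn : 1 ≤ n)
    (B : ℝ) (hB0 : 0 ≤ B) (hBq : B < (q : ℝ) / 2) :
    ((Nat.card {A : Matrix (Fin m) (Fin n) (ZMod q) //
        ∃ y : Fin m → ℤ, y ≠ 0 ∧ Real.sqrt (∑ i, ((y i : ℝ))^2) ≤ B ∧
          ∃ x : Fin n → ZMod q, (fun i => (y i : ZMod q)) = A.mulVec x} : ℝ)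
        / (Nat.card (Matrix (Fin m) (Fin n) (ZMod q)) : ℝ))
      ≤ (q : ℝ)^n / (q : ℝ)^m *
        (Nat.card {y : Fin m → ℤ // y ≠ 0 ∧ Real.sqrt (∑ i, ((y i : ℝ))^2) ≤ B} : ℝ) := by
  simpa only [Nat.card_fin] using qary_lattice_l2_min_general (ι := Fin m) (κ := Fin n) hq
    (by linarith : B < q)
end

section
/- Let z > 0 be a real number, let c ≥ 1 be an integer, and let a, b be real numbers with |a − b| ≤ z. Then the Lebesgue measure of the set {w ∈ [0,1) : ⌊(a/z − w) mod c⌋ ≠ ⌊(b/z − w) mod c⌋} is at most |a − b|/z, where t mod c denotes the representative of t in [0,c). -/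
open MeasureTheory

/-- `t mod c`: the representative of the real number `t` modulo `c` lying in `[0, c)`. -/
noncomputable def rmod (t c : ℝ) : ℝ := t - c * ⌊t / c⌋

/-!
The shifts `w ∈ [0, 1)` for which an integer separates `x - w` from `y - w` are fractional parts of
points of the half-open interval between `x` and `y`. Taking fractional parts translates each piece
of the interval between consecutive integers, so it cannot increase Lebesgue measure. Reduction
modulo a natural number `c` commutes with the floor, hence creates no further separations.
-/

lemma floor_rmod_natCast (t : ℝ) (c : ℕ) : ⌊rmod t c⌋ = ⌊t⌋ % c :=
  calc ⌊rmod t c⌋ = ⌊t - ((c * (⌊t⌋ / c) : ℤ) : ℝ)⌋ := by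
        rw [rmod, Int.floor_div_natCast, Int.cast_mul, Int.cast_natCast]
    _ = ⌊t⌋ % c := by rw [Int.floor_sub_intCast, Int.emod_def]

section FloorRing

variable {R : Type*} [Ring R] [LinearOrder R] [FloorRing R]

lemma exists_intCast_mem_uIoc_of_floor_ne {s t : R} (h : ⌊s⌋ ≠ ⌊t⌋) :
    ∃ n : ℤ, (n : R) ∈ Set.uIoc s t := by
  rcases lt_or_gt_of_ne h with hst | hts
  · exact ⟨⌊t⌋, Set.mem_uIoc.2 (Or.inl ⟨Int.floor_lt.1 hst, Int.floor_le t⟩)⟩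
  · exact ⟨⌊s⌋, Set.mem_uIoc.2 (Or.inr ⟨Int.floor_lt.1 hts, Int.floor_le s⟩)⟩

variable [IsStrictOrderedRing R]

lemma setOf_floor_sub_ne_subset_image_fract (x y : R) :
    {w | w ∈ Set.Ico (0 : R) 1 ∧ ⌊x - w⌋ ≠ ⌊y - w⌋} ⊆ Int.fract '' Set.uIoc x y := by
  rintro w ⟨hw, hne⟩
  obtain ⟨n, hn⟩ := exists_intCast_mem_uIoc_of_floor_ne hne
  refine ⟨w + n, ?_, ?_⟩
  · simpa only [Set.mem_uIoc, sub_lt_iff_lt_add', le_sub_iff_add_le'] using hn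
  · rw [Int.fract_add_intCast, Int.fract_eq_self.2 hw]

lemma measure_image_fract_le [TopologicalSpace R] [OrderTopology R] [MeasurableSpace R]
    [BorelSpace R] (μ : Measure R) [μ.IsAddRightInvariant] (s : Set R) :
    μ (Int.fract '' s) ≤ μ s := by
  have image_subset :
      Int.fract '' s ⊆ ⋃ n : ℤ, (· + (n : R)) ⁻¹' (s ∩ Int.floor ⁻¹' {n}) := by
    rintro _ ⟨u, hu, rfl⟩
    refine Set.mem_iUnion.2 ⟨⌊u⌋, ?_⟩
    rw [Set.mem_preimage, Int.fract_add_floor]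
    exact ⟨hu, rfl⟩
  have measurableSet_floor (n : ℤ) : MeasurableSet (Int.floor ⁻¹' {n} : Set R) :=
    Int.measurable_floor (measurableSet_singleton n)
  calc μ (Int.fract '' s)
      ≤ ∑' n : ℤ, μ ((· + (n : R)) ⁻¹' (s ∩ Int.floor ⁻¹' {n})) :=
        (measure_mono image_subset).trans (measure_iUnion_le _)
    _ = ∑' n : ℤ, μ.restrict s (Int.floor ⁻¹' {n}) := by
        simp only [measure_preimage_add_right, Measure.restrict_apply (measurableSet_floor _),
          Set.inter_comm s]
    _ = μ s := by
        rw [← measure_iUnion (pairwise_disjoint_fiber _) measurableSet_floor,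
          ← Set.preimage_iUnion, Set.iUnion_of_singleton, Set.preimage_univ,
          Measure.restrict_apply_univ]

end FloorRing

lemma volume_setOf_floor_sub_ne_le (x y : ℝ) :
    volume {w | w ∈ Set.Ico (0 : ℝ) 1 ∧ ⌊x - w⌋ ≠ ⌊y - w⌋} ≤ ENNReal.ofReal |x - y| :=
  calc volume {w | w ∈ Set.Ico (0 : ℝ) 1 ∧ ⌊x - w⌋ ≠ ⌊y - w⌋}
      ≤ volume (Int.fract '' Set.uIoc x y) :=
        measure_mono (setOf_floor_sub_ne_subset_image_fract x y)
    _ ≤ volume (Set.uIoc x y) := measure_image_fract_le volume _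
    _ = ENNReal.ofReal |x - y| := by rw [Real.volume_uIoc, abs_sub_comm]

theorem grid_separation_probability_general (z : ℝ) (hz : 0 < z) (c : ℕ) (a b : ℝ) :
    volume {w : ℝ | w ∈ Set.Ico (0 : ℝ) 1 ∧
        ⌊rmod (a / z - w) c⌋ ≠ ⌊rmod (b / z - w) c⌋}
      ≤ ENNReal.ofReal (|a - b| / z) := by
  have subset_floor_ne : {w : ℝ | w ∈ Set.Ico (0 : ℝ) 1 ∧
        ⌊rmod (a / z - w) c⌋ ≠ ⌊rmod (b / z - w) c⌋}
      ⊆ {w | w ∈ Set.Ico (0 : ℝ) 1 ∧ ⌊a / z - w⌋ ≠ ⌊b / z - w⌋} := by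
    rintro w ⟨hw, hne⟩
    simp only [floor_rmod_natCast] at hne
    exact ⟨hw, ne_of_apply_ne (· % (c : ℤ)) hne⟩
  have abs_sub_div : |a / z - b / z| = |a - b| / z := by
    rw [← sub_div, abs_div, abs_of_pos hz]
  rw [← abs_sub_div]
  exact (measure_mono subset_floor_ne).trans (volume_setOf_floor_sub_ne_le _ _)

/-- **Single-coordinate cell-separation probability** (core computation in the paper's
Lemma 3.2): a uniformly shifted grid of cell width `z` separates two reals at distance
`|a − b| ≤ z` with probability at most `|a − b|/z`. -/
theorem grid_separation_probability (z : ℝ) (hz : 0 < z) (c : ℕ) (hc : 1 ≤ c)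
    (a b : ℝ) (hab : |a - b| ≤ z) :
    volume {w : ℝ | w ∈ Set.Ico (0 : ℝ) 1 ∧
        ⌊rmod (a / z - w) c⌋ ≠ ⌊rmod (b / z - w) c⌋}
      ≤ ENNReal.ofReal (|a - b| / z) :=
  grid_separation_probability_general z hz c a b
end
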